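/- arXiv:2001.00607 — 2 statements merged into one kernel-verified Lean document; each statement's English description precedes it below -/
import Mathlib

section
/- Let H ∈ ℝ^{L×K}, P > 0, D ∈ ℝ^{L×L} diagonal with nonnegative diagonal entries, and a ∈ ℝ^K. Then for every equalizer b ∈ ℝ^L, the effective noise variance satisfies σ_eff²(b, a) = P·‖Hᵀ b − a‖² + bᵀ (I + D) b ≥ aᵀ (P^{-1} I + Hᵀ (I + D)^{-1} H)^{-1} a; i.e., the MMSE equalizer b* = P (P H Hᵀ + I + D)^{-1} H a minimizes the effective noise variance over all b ∈ ℝ^L. -/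
open Matrix

/-!
In `(b, a)` jointly, the effective noise variance is the quadratic form of a block matrix with
top-left block `M = H Q Hᴴ + S`, where `Q` is the signal covariance and `S` the noise covariance.
Eliminating `b` completes the square: the variance is the form of `M` at `b - b*` plus the form of
the Schur complement `Q - Q Hᴴ M⁻¹ H Q` at `a`, and by the Woodbury identity this Schur complement
is `(Q⁻¹ + Hᴴ S⁻¹ H)⁻¹`.
-/

variable {l k 𝕜 : Type*} [Fintype l] [Fintype k]

section CommRing

variable [CommRing 𝕜]

/-- The variance of the effective noise left after applying the equalizer `b` to the output of the
channel `H` and subtracting the target combination `a`, for signal covariance `Q` and noise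
covariance `S`. Equation (49) of the paper is the real case `Q = P • 1`, `S = 1 + D`. -/
def effectiveNoiseVariance [StarRing 𝕜] (H : Matrix l k 𝕜) (Q : Matrix k k 𝕜) (S : Matrix l l 𝕜)
    (a : k → 𝕜) (b : l → 𝕜) : 𝕜 :=
  star (Hᴴ *ᵥ b - a) ⬝ᵥ (Q *ᵥ (Hᴴ *ᵥ b - a)) + star b ⬝ᵥ (S *ᵥ b)

/-- The linear minimum mean square error equalizer for the target combination `a`. It is meaningful
only where the output covariance `H * Q * Hᴴ + S` is invertible. -/
noncomputable def mmseEqualizer [StarRing 𝕜] [DecidableEq l] (H : Matrix l k 𝕜) (Q : Matrix k k 𝕜)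
    (S : Matrix l l 𝕜) (a : k → 𝕜) : l → 𝕜 :=
  (H * Q * Hᴴ + S)⁻¹ *ᵥ (H *ᵥ (Q *ᵥ a))

theorem inv_inv_add_mul_inv_mul_eq_sub [DecidableEq l] [DecidableEq k] {Q : Matrix k k 𝕜}
    {S : Matrix l l 𝕜} {U : Matrix k l 𝕜} {V : Matrix l k 𝕜} (hQ : IsUnit Q) (hS : IsUnit S)
    (hM : IsUnit (V * Q * U + S)) :
    (Q⁻¹ + U * S⁻¹ * V)⁻¹ = Q - Q * U * (V * Q * U + S)⁻¹ * V * Q := by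
  have hQ_inv : Q⁻¹⁻¹ = Q := nonsing_inv_nonsing_inv Q ((isUnit_iff_isUnit_det Q).1 hQ)
  have hS_inv : S⁻¹⁻¹ = S := nonsing_inv_nonsing_inv S ((isUnit_iff_isUnit_det S).1 hS)
  have h := add_mul_mul_inv_eq_sub Q⁻¹ U S⁻¹ V (isUnit_nonsing_inv_iff.2 hQ)
    (isUnit_nonsing_inv_iff.2 hS) (by rwa [hQ_inv, hS_inv, add_comm])
  rwa [hQ_inv, hS_inv, add_comm S] at h

variable [StarRing 𝕜] {Q : Matrix k k 𝕜}

theorem effectiveNoiseVariance_eq_fromBlocks (H : Matrix l k 𝕜) (hQ : Q.IsHermitian)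
    (S : Matrix l l 𝕜) (a : k → 𝕜) (b : l → 𝕜) :
    effectiveNoiseVariance H Q S a b =
      star (Sum.elim b a) ᵥ* fromBlocks (H * Q * Hᴴ + S) (-(H * Q)) (-(H * Q))ᴴ Q ⬝ᵥ
        Sum.elim b a := by
  simp only [effectiveNoiseVariance, Function.star_sumElim, vecMul_fromBlocks,
    sumElim_dotProduct_sumElim, star_sub, star_mulVec, conjTranspose_conjTranspose,
    conjTranspose_neg, conjTranspose_mul, hQ.eq, Matrix.mul_assoc, ← vecMul_vecMul, vecMul_add,
    vecMul_neg, add_dotProduct, sub_dotProduct, neg_dotProduct, dotProduct_mulVec, sub_vecMul,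
    mulVec_sub, dotProduct_sub, Sum.elim_comp_inl, Sum.elim_comp_inr]
  abel

theorem effectiveNoiseVariance_eq_add_schur [DecidableEq l] {H : Matrix l k 𝕜} {S : Matrix l l 𝕜}
    (hQ : Q.IsHermitian) (hS : S.IsHermitian) (hM : IsUnit (H * Q * Hᴴ + S)) (a : k → 𝕜)
    (b : l → 𝕜) :
    effectiveNoiseVariance H Q S a b =
      star (b - mmseEqualizer H Q S a) ⬝ᵥ
          ((H * Q * Hᴴ + S) *ᵥ (b - mmseEqualizer H Q S a)) +
        star a ⬝ᵥ ((Q - Q * Hᴴ * (H * Q * Hᴴ + S)⁻¹ * H * Q) *ᵥ a) := by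
  have : Invertible (H * Q * Hᴴ + S) := hM.invertible
  have hM_herm : (H * Q * Hᴴ + S).IsHermitian := (isHermitian_mul_mul_conjTranspose H hQ).add hS
  have hb : b + ((H * Q * Hᴴ + S)⁻¹ * -(H * Q)) *ᵥ a = b - mmseEqualizer H Q S a := by
    simp only [mmseEqualizer, mulVec_mulVec, Matrix.mul_neg, neg_mulVec, ← sub_eq_add_neg]
  have hQ_schur : Q - (-(H * Q))ᴴ * (H * Q * Hᴴ + S)⁻¹ * -(H * Q) =
      Q - Q * Hᴴ * (H * Q * Hᴴ + S)⁻¹ * H * Q := by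
    simp only [conjTranspose_neg, conjTranspose_mul, hQ.eq, Matrix.neg_mul, Matrix.mul_neg,
      neg_neg, Matrix.mul_assoc]
  rw [effectiveNoiseVariance_eq_fromBlocks H hQ, schur_complement_eq₁₁ _ _ _ _ hM_herm, hb,
    hQ_schur, ← dotProduct_mulVec, ← dotProduct_mulVec]

theorem mmseEqualizer_smul_one [DecidableEq l] [DecidableEq k] (H : Matrix l k 𝕜) (p : 𝕜)
    (S : Matrix l l 𝕜) (a : k → 𝕜) :
    mmseEqualizer H (p • 1) S a = p • ((p • (H * Hᴴ) + S)⁻¹ *ᵥ (H *ᵥ a)) := by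
  simp [mmseEqualizer, smul_mulVec, mulVec_smul]

theorem effectiveNoiseVariance_smul_one [TrivialStar 𝕜] [DecidableEq k] (H : Matrix l k 𝕜) (p : 𝕜)
    (S : Matrix l l 𝕜) (a : k → 𝕜) (b : l → 𝕜) :
    effectiveNoiseVariance H (p • 1) S a b =
      p * (∑ i, ((Hᵀ *ᵥ b) i - a i) ^ 2) + b ⬝ᵥ (S *ᵥ b) := by
  rw [effectiveNoiseVariance, smul_mulVec, one_mulVec, dotProduct_smul, smul_eq_mul]
  simp only [conjTranspose_eq_transpose_of_trivial, star_trivial, sq, dotProduct, Pi.sub_apply]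

end CommRing

section Field

theorem smul_one_inv [Field 𝕜] [DecidableEq k] (p : 𝕜) :
    (p • (1 : Matrix k k 𝕜))⁻¹ = p⁻¹ • 1 := by
  obtain rfl | hp := eq_or_ne p 0
  · simp
  · exact inv_eq_left_inv (by simp [hp])

variable [Field 𝕜] [PartialOrder 𝕜] [StarRing 𝕜] [AddLeftMono 𝕜] [DecidableEq l] [DecidableEq k]
  {Q : Matrix k k 𝕜} {S : Matrix l l 𝕜}

theorem effectiveNoiseVariance_eq_add_of_posDef (H : Matrix l k 𝕜) (hQ : Q.PosDef) (hS : S.PosDef)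
    (a : k → 𝕜) (b : l → 𝕜) :
    effectiveNoiseVariance H Q S a b =
      star (b - mmseEqualizer H Q S a) ⬝ᵥ
          ((H * Q * Hᴴ + S) *ᵥ (b - mmseEqualizer H Q S a)) +
        star a ⬝ᵥ ((Q⁻¹ + Hᴴ * S⁻¹ * H)⁻¹ *ᵥ a) := by
  have hM : IsUnit (H * Q * Hᴴ + S) :=
    (PosDef.posSemidef_add (hQ.posSemidef.mul_mul_conjTranspose_same H) hS).isUnit
  rw [inv_inv_add_mul_inv_mul_eq_sub hQ.isUnit hS.isUnit hM,
    effectiveNoiseVariance_eq_add_schur hQ.isHermitian hS.isHermitian hM]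

theorem mmse_optimality_general (H : Matrix l k 𝕜) (hQ : Q.PosDef) (hS : S.PosDef) (a : k → 𝕜) :
    (∀ b, star a ⬝ᵥ ((Q⁻¹ + Hᴴ * S⁻¹ * H)⁻¹ *ᵥ a) ≤ effectiveNoiseVariance H Q S a b) ∧
      effectiveNoiseVariance H Q S a (mmseEqualizer H Q S a) =
        star a ⬝ᵥ ((Q⁻¹ + Hᴴ * S⁻¹ * H)⁻¹ *ᵥ a) := by
  have hM : (H * Q * Hᴴ + S).PosSemidef :=
    (hQ.posSemidef.mul_mul_conjTranspose_same H).add hS.posSemidef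
  refine ⟨fun b => ?_, ?_⟩
  · rw [effectiveNoiseVariance_eq_add_of_posDef H hQ hS]
    exact le_add_of_nonneg_left (hM.dotProduct_mulVec_nonneg _)
  · simp [effectiveNoiseVariance_eq_add_of_posDef H hQ hS]

end Field

/-- **MMSE optimality.** For every equalizer `b ∈ ℝ^L`, the effective noise variance
`σ_eff²(b,a) = P‖Hᵀ b − a‖² + bᵀ(I+D)b` is at least `aᵀ (P⁻¹ I + Hᵀ (I+D)⁻¹ H)⁻¹ a`;
i.e., the MMSE equalizer `b* = P (P H Hᵀ + I + D)⁻¹ H a` minimizes the effective noise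
variance over all `b ∈ ℝ^L`. -/
theorem mmse_optimality {L K : ℕ} (H : Matrix (Fin L) (Fin K) ℝ)
    (P : ℝ) (hP : 0 < P) (dv : Fin L → ℝ) (hdv : ∀ i, 0 ≤ dv i) (a : Fin K → ℝ) :
    let D : Matrix (Fin L) (Fin L) ℝ := Matrix.diagonal dv
    let σeff : (Fin L → ℝ) → ℝ :=
      fun b => P * (∑ i, (Hᵀ.mulVec b i - a i) ^ 2) + b ⬝ᵥ ((1 + D).mulVec b)
    let bstar : Fin L → ℝ := P • ((P • (H * Hᵀ) + 1 + D)⁻¹).mulVec (H.mulVec a)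
    (∀ b : Fin L → ℝ,
        a ⬝ᵥ ((P⁻¹ • (1 : Matrix (Fin K) (Fin K) ℝ) + Hᵀ * (1 + D)⁻¹ * H)⁻¹.mulVec a) ≤
          σeff b) ∧
    (∀ b : Fin L → ℝ, σeff bstar ≤ σeff b) := by
  intro D σeff bstar
  have hS : (1 + D).PosDef := PosDef.one.add_posSemidef (PosSemidef.diagonal hdv)
  obtain ⟨hle, heq⟩ := mmse_optimality_general H (PosDef.one.smul hP) hS a
  simp only [effectiveNoiseVariance_smul_one, mmseEqualizer_smul_one, smul_one_inv, star_trivial,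
    conjTranspose_eq_transpose_of_trivial, ← add_assoc] at hle heq
  exact ⟨hle, fun b => heq.trans_le (hle b)⟩
end

section
/- Let H ∈ ℝ^{L×K} with H ≠ 0, P > 0, d > 0, ΔR > 0, and C ∈ ℝ. Suppose L·C ≤ L·R_BT(H, d) + ΔR and (1/2)·log₂ det(I_L + P H Hᵀ) ≤ L·C − ΔR − L/2. Then d < 1. -/
open Matrix

/-!
Write `A = P H Hᵀ` and `I(S) = ½ log₂ det(1 + S)`. Then `L · R_BT(H, d) = I(d⁻¹(A + 1))`, and `I` is
strictly increasing in the Loewner order. If `d ≥ 1`, then `d⁻¹(A + 1) ≤ A + 1 < 1 + 2A`, while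
`1 + (1 + 2A) = 2(1 + A)` gives `I(1 + 2A) = L/2 + I(A)`. Hence `L · R_BT(H, d) < L/2 + I(A)`, which
contradicts the two rate hypotheses added together.
-/

section LoewnerOrder

open scoped ComplexOrder MatrixOrder

variable {𝕜 m n : Type*} [RCLike 𝕜]

lemma self_mul_conjTranspose_pos [Fintype m] [Finite n] {H : Matrix n m 𝕜} (hH : H ≠ 0) :
    0 < H * Hᴴ :=
  (posSemidef_self_mul_conjTranspose H).nonneg.lt_of_ne'
    (self_mul_conjTranspose_eq_zero.not.mpr hH)

variable [Fintype n] [DecidableEq n] {A B : Matrix n n 𝕜}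

lemma det_one_add_eq_prod_one_add_eigenvalues (hA : A.IsHermitian) :
    (1 + A).det = ((∏ i, (1 + hA.eigenvalues i) : ℝ) : 𝕜) := by
  have h_neg : 1 + A = -(scalar n (-1) - A) := by
    rw [map_neg, map_one]
    abel
  rw [h_neg, det_neg, ← eval_charpoly, hA.charpoly_eq, Polynomial.eval_prod, ← Finset.card_univ,
    ← Finset.prod_const, ← Finset.prod_mul_distrib]
  simp [add_comm]

lemma one_lt_det_one_add (hA : 0 < A) : 1 < (1 + A).det := by
  have hA_psd : A.PosSemidef := hA.le.posSemidef
  have eigenvalues_ne_zero : hA_psd.isHermitian.eigenvalues ≠ 0 :=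
    hA_psd.isHermitian.eigenvalues_eq_zero_iff.not.mpr hA.ne'
  obtain ⟨j, hj⟩ := Function.ne_iff.mp eigenvalues_ne_zero
  have hj_pos : 0 < hA_psd.isHermitian.eigenvalues j :=
    (hA_psd.eigenvalues_nonneg j).lt_of_ne' hj
  have one_lt_prod : 1 < ∏ i, (1 + hA_psd.isHermitian.eigenvalues i) := by
    calc
      1 = ∏ _i : n, (1 : ℝ) := Finset.prod_const_one.symm
      _ < ∏ i, (1 + hA_psd.isHermitian.eigenvalues i) :=
        Finset.prod_lt_prod (fun _ _ ↦ one_pos)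
          (fun i _ ↦ le_add_of_nonneg_right (hA_psd.eigenvalues_nonneg i))
          ⟨j, Finset.mem_univ j, lt_add_of_pos_right 1 hj_pos⟩
  rw [det_one_add_eq_prod_one_add_eigenvalues hA_psd.isHermitian]
  exact_mod_cast one_lt_prod

-- Writing `A = Sᴴ * S`, congruence by `S⁻¹` reduces the comparison to the case `A = 1`.
lemma det_lt_det_of_posDef (hA : A.PosDef) (hAB : A < B) : A.det < B.det := by
  obtain ⟨_, ⟨S, rfl⟩, rfl⟩ :=
    CStarAlgebra.isStrictlyPositive_iff_eq_star_mul_self.mp hA.isStrictlyPositive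
  let C : Matrix n n 𝕜 := star S⁻¹.val * (B - star S.val * S.val) * S⁻¹.val
  have C_pos : 0 < C := star_left_conjugate_pos (sub_pos.mpr hAB) S⁻¹.isUnit.isRegular
  have star_mul_star_inv : star S.val * star S⁻¹.val = 1 := by
    rw [← star_mul, S.inv_mul, star_one]
  have conj_C : star S.val * C * S.val = B - star S.val * S.val := by
    simp only [C, ← mul_assoc, star_mul_star_inv, one_mul, S.inv_mul_cancel_right]
  have conj_one_add_C : star S.val * (1 + C) * S.val = B := by
    rw [mul_add, add_mul, conj_C, mul_one, add_sub_cancel]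
  calc
    (star S.val * S.val).det < (star S.val * S.val).det * (1 + C).det :=
      lt_mul_of_one_lt_right hA.det_pos (one_lt_det_one_add C_pos)
    _ = (star S.val * (1 + C) * S.val).det := by
      simp only [det_mul, mul_right_comm]
    _ = B.det := by rw [conj_one_add_C]

end LoewnerOrder

section Rate

open scoped ComplexOrder MatrixOrder

variable {𝕜 m n : Type*} [RCLike 𝕜] [Fintype m] [Fintype n] [DecidableEq n]

/-- The mutual information `½ log₂ det(I + S)`, in bits per real dimension, of a Gaussian vector
channel with signal covariance `S` and unit noise. The real part only serves to read the determinant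
of a Hermitian matrix, which is real, as an element of `ℝ`. -/
noncomputable def gaussianMutualInfo (S : Matrix n n 𝕜) : ℝ :=
  (1 / 2) * Real.logb 2 (RCLike.re (1 + S).det)

/-- The symmetric Berger–Tung rate `R_BT(H, d)`, per terminal and real dimension, as a function of
the distortion `d` and of the signal covariance `A = P H Hᴴ` of the observations, whose noise has
unit variance. With no terminals it is `0`, because `1 / 0 = 0`. -/
noncomputable def bergerTungRate (A : Matrix n n 𝕜) (d : ℝ) : ℝ :=
  (1 / (2 * (Fintype.card n : ℝ))) * Real.logb 2 (RCLike.re (1 + d⁻¹ • (A + 1)).det)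

lemma card_mul_bergerTungRate (A : Matrix n n 𝕜) (d : ℝ) :
    Fintype.card n * bergerTungRate A d = gaussianMutualInfo (d⁻¹ • (A + 1)) := by
  rw [bergerTungRate, gaussianMutualInfo]
  cases isEmpty_or_nonempty n
  · simp
  · field_simp

variable {A B : Matrix n n 𝕜} {d : ℝ}

lemma gaussianMutualInfo_lt_gaussianMutualInfo (hA : 0 ≤ A) (hAB : A < B) :
    gaussianMutualInfo A < gaussianMutualInfo B := by
  have posDef_one_add : (1 + A).PosDef := PosDef.one.add_posSemidef hA.posSemidef
  have det_lt : (1 + A).det < (1 + B).det :=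
    det_lt_det_of_posDef posDef_one_add (add_lt_add_right hAB 1)
  have re_det_pos : 0 < RCLike.re (1 + A).det := (RCLike.pos_iff.mp posDef_one_add.det_pos).1
  have re_det_lt : RCLike.re (1 + A).det < RCLike.re (1 + B).det :=
    (RCLike.lt_iff_re_im.mp det_lt).1
  exact mul_lt_mul_of_pos_left (Real.logb_lt_logb one_lt_two re_det_pos re_det_lt) one_half_pos

lemma gaussianMutualInfo_one_add_two_smul (hA : 0 ≤ A) :
    gaussianMutualInfo (1 + (2 : ℝ) • A) = Fintype.card n / 2 + gaussianMutualInfo A := by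
  have re_det_pos : 0 < RCLike.re (1 + A).det :=
    (RCLike.pos_iff.mp (PosDef.one.add_posSemidef hA.posSemidef).det_pos).1
  have re_det_eq :
      RCLike.re (1 + (1 + (2 : ℝ) • A)).det = 2 ^ Fintype.card n * RCLike.re (1 + A).det := by
    have factor : 1 + (1 + (2 : ℝ) • A) = (2 : ℝ) • (1 + A) := by module
    rw [factor, det_smul_of_tower, RCLike.smul_re]
  rw [gaussianMutualInfo, gaussianMutualInfo, re_det_eq,
    Real.logb_mul (by positivity) re_det_pos.ne', Real.logb_pow, Real.logb_self_eq_one one_lt_two]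
  ring

lemma card_mul_bergerTungRate_lt (hA : 0 < A) (hd : 1 ≤ d) :
    Fintype.card n * bergerTungRate A d < Fintype.card n / 2 + gaussianMutualInfo A := by
  have nonneg_add_one : 0 ≤ A + 1 := add_nonneg hA.le zero_le_one
  have nonneg_smul : 0 ≤ d⁻¹ • (A + 1) :=
    smul_nonneg (inv_nonneg.mpr (zero_le_one.trans hd)) nonneg_add_one
  have smul_lt : d⁻¹ • (A + 1) < 1 + (2 : ℝ) • A :=
    calc
      d⁻¹ • (A + 1) ≤ A + 1 := smul_le_of_le_one_left nonneg_add_one (inv_le_one_of_one_le₀ hd)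
      _ < A + 1 + A := lt_add_of_pos_right _ hA
      _ = 1 + (2 : ℝ) • A := by module
  calc
    Fintype.card n * bergerTungRate A d = gaussianMutualInfo (d⁻¹ • (A + 1)) :=
      card_mul_bergerTungRate A d
    _ < gaussianMutualInfo (1 + (2 : ℝ) • A) :=
      gaussianMutualInfo_lt_gaussianMutualInfo nonneg_smul smul_lt
    _ = Fintype.card n / 2 + gaussianMutualInfo A := gaussianMutualInfo_one_add_two_smul hA.le

theorem distortion_upper_bound_general {H : Matrix n m 𝕜} (hH : H ≠ 0) {P d ΔR C : ℝ} (hP : 0 < P)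
    (h_rate : Fintype.card n * C ≤ Fintype.card n * bergerTungRate (P • (H * Hᴴ)) d + ΔR)
    (h_info : gaussianMutualInfo (P • (H * Hᴴ)) ≤
      Fintype.card n * C - ΔR - (Fintype.card n : ℝ) / 2) :
    d < 1 := by
  by_contra! hd
  have rate_lt := card_mul_bergerTungRate_lt (smul_pos hP (self_mul_conjTranspose_pos hH)) hd
  linarith

end Rate

/-- **Upper bound on the saturating distortion (Lemma 14, second claim).** If `H ≠ 0`,
`L·C ≤ L·R_BT(H,d) + ΔR` where `R_BT(H,d) = (1/(2L)) log₂ det(I + (1/d)(P H Hᵀ + I))`, and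
`(1/2) log₂ det(I + P H Hᵀ) ≤ L·C − ΔR − L/2`, then `d < 1`. -/
theorem distortion_upper_bound {L K : ℕ}
    (H : Matrix (Fin L) (Fin K) ℝ) (hH : H ≠ 0) (P d ΔR C : ℝ)
    (hP : 0 < P) (hd : 0 < d) (hΔR : 0 < ΔR)
    (hA : (L : ℝ) * C ≤
      (L : ℝ) * ((1 / (2 * (L : ℝ))) * Real.logb 2 (1 + d⁻¹ • (P • (H * Hᵀ) + 1)).det) + ΔR)
    (hBc : (1 / 2) * Real.logb 2 (1 + P • (H * Hᵀ)).det ≤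
      (L : ℝ) * C - ΔR - (L : ℝ) / 2) :
    d < 1 := by
  exact distortion_upper_bound_general hH hP (by simpa [bergerTungRate] using hA)
    (by simpa [gaussianMutualInfo] using hBc)
end
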